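/- arXiv:2110.08888 — 2 statements merged into one kernel-verified Lean document; each statement's English description precedes it below -/
import Mathlib

section
/- Positive Characteristic Poincaré Lemma: Let K be a field of characteristic p > 0 and R = K[z_1,...,z_n] (or K(z_1,...,z_n)). An r-form ω = Σ_I a_I dz_I ∈ Ω^r_{R/K} with r ≥ 1 is exact (ω = dη for some η ∈ Ω^{r−1}_{R/K}) if and only if ω is p-closed, i.e. dω = 0 and for every ordered multi-index I = (i_1 < ... < i_r) one has ∂_{i_1}^{p−1}···∂_{i_r}^{p−1}(a_I) = 0. -/
open MvPolynomial

/-- An `r`-form in `n` variables with coefficients in `R`, written in the standard basis of the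
`dz_I` indexed by the `r`-element subsets `I` of the set of variables. -/
abbrev GForm (R : Type) (n r : ℕ) := {s : Finset (Fin n) // s.card = r} → R

/-- The exterior derivative of an `r`-form, relative to a family `D` of partial derivatives:
`(dω)_T = ∑_{j ∈ T} (-1)^{pos of j in T} D_j ω_{T∖{j}}`. -/
noncomputable def gextd {R : Type} [CommRing R] {n r : ℕ} (D : Fin n → R → R)
    (ω : GForm R n r) : GForm R n (r + 1) :=
  fun T => ∑ j ∈ T.1.attach,
    (-1 : R) ^ ((T.1.filter (fun k => k < j.1)).card) *
      D j.1 (ω ⟨T.1.erase j.1, by rw [Finset.card_erase_of_mem j.2, T.2]; rfl⟩)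

/-- The iterated operator `∂_{i_1}^{p-1} ⋯ ∂_{i_r}^{p-1}` for `T = {i_1 < … < i_r}`. -/
def gpdSet {R : Type} {n : ℕ} (D : Fin n → R → R) (p : ℕ) (T : Finset (Fin n)) (f : R) : R :=
  (T.sort (· ≤ ·)).foldr (fun i g => (D i)^[p - 1] g) f

/-- The family of formal partial derivatives on `K[z_1,…,z_n]`. -/
noncomputable def pderivFam (K : Type) [CommRing K] (n : ℕ) :
    Fin n → MvPolynomial (Fin n) K → MvPolynomial (Fin n) K :=
  fun i f => pderiv i f

section ExteriorDerivative

variable {n : ℕ} {K M : Type} [Field K] [AddCommGroup M] [Module K M]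

/-- The sign `(-1)^{#{k ∈ T : k < j}}` of the variable `j` relative to the index set `T`. -/
def posSign (j : Fin n) (T : Finset (Fin n)) : ℤ :=
  (-1) ^ (T.filter (fun k => k < j)).card

theorem posSign_mul_self (j : Fin n) (T : Finset (Fin n)) : posSign j T * posSign j T = 1 := by
  rw [posSign, ← mul_pow]; simp

theorem posSign_erase {i j : Fin n} {T : Finset (Fin n)} (hi : i ∈ T) :
    posSign j (T.erase i) = (if i < j then -1 else 1) * posSign j T := by
  unfold posSign
  rw [Finset.filter_erase]
  split_ifs with h
  · have hm : i ∈ T.filter (fun k => k < j) := by simp [hi, h]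
    rw [← Finset.card_erase_add_one hm, pow_succ]; ring
  · rw [Finset.erase_eq_of_notMem (by simp [h]), one_mul]

theorem posSign_mul_posSign_erase {i j : Fin n} {T : Finset (Fin n)} (hij : i ≠ j)
    (hi : i ∈ T) (hj : j ∈ T) :
    posSign j T * posSign i (T.erase j) = -(posSign i T * posSign j (T.erase i)) := by
  rw [posSign_erase hi, posSign_erase hj]
  rcases lt_or_gt_of_ne hij with h | h
  · simp [h, h.not_gt, mul_comm]
  · simp [h, h.not_gt, mul_comm]

/-- The exterior derivative on forms of mixed degree, indexed by all sets of variables. -/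
def totalExtDeriv (D : Fin n → Module.End K M) (ω : Finset (Fin n) → M) : Finset (Fin n) → M :=
  fun T => ∑ j ∈ T, posSign j T • D j (ω (T.erase j))

theorem totalExtDeriv_totalExtDeriv {D : Fin n → Module.End K M} (hD : ∀ i j, Commute (D i) (D j))
    (ω : Finset (Fin n) → M) : totalExtDeriv D (totalExtDeriv D ω) = 0 := by
  funext T
  simp only [totalExtDeriv, map_sum, map_zsmul, Finset.smul_sum, smul_smul, Pi.zero_apply]
  rw [Finset.sum_sigma']
  refine Finset.sum_involution (fun x _ => ⟨x.2, x.1⟩) ?_ ?_ ?_ ?_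
  · rintro ⟨j, i⟩ hx
    simp only [Finset.mem_sigma, Finset.mem_erase] at hx
    obtain ⟨hj, hij, hi⟩ := hx
    have hc : D j (D i (ω ((T.erase j).erase i))) = D i (D j (ω ((T.erase i).erase j))) := by
      rw [Finset.erase_right_comm]
      exact LinearMap.congr_fun (hD j i) _
    simp only [hc, posSign_mul_posSign_erase hij hi hj, neg_smul, neg_add_cancel]
  · rintro ⟨j, i⟩ hx _ h
    simp only [Finset.mem_sigma, Finset.mem_erase] at hx
    simp only [Sigma.mk.injEq] at h
    exact hx.2.1 h.1
  · rintro ⟨j, i⟩ hx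
    simp only [Finset.mem_sigma, Finset.mem_erase] at hx ⊢
    exact ⟨hx.2.2, hx.2.1.symm, hx.1⟩
  · intros; rfl

theorem totalExtDeriv_add (D : Fin n → Module.End K M) (ω η : Finset (Fin n) → M) :
    totalExtDeriv D (ω + η) = totalExtDeriv D ω + totalExtDeriv D η := by
  funext T
  simp [totalExtDeriv, Finset.sum_add_distrib]

/-- Contraction with `∂_i` combined with an operator `J`, thought of as integration along the
`i`-th variable. -/
def contractInt (i : Fin n) (J : Module.End K M) (ω : Finset (Fin n) → M) :
    Finset (Fin n) → M :=
  fun T => if i ∈ T then 0 else posSign i T • J (ω (insert i T))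

/-- The operator on forms homotopic to the identity via `contractInt i J`. -/
def homotopyDefect (i : Fin n) (Di J : Module.End K M) (ω : Finset (Fin n) → M) :
    Finset (Fin n) → M :=
  fun T => if i ∈ T then (1 - Di * J) (ω T) else (1 - J * Di) (ω T)

theorem totalExtDeriv_contractInt {D : Fin n → Module.End K M} {i : Fin n} {J : Module.End K M}
    (hJ : ∀ j, j ≠ i → Commute (D j) J) {ω : Finset (Fin n) → M} (hω : totalExtDeriv D ω = 0) :
    totalExtDeriv D (contractInt i J ω) + homotopyDefect i (D i) J ω = ω := by
  funext T
  simp only [Pi.add_apply, totalExtDeriv, homotopyDefect]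
  by_cases hi : i ∈ T
  · rw [Finset.sum_eq_single_of_mem i hi]
    · have hs : posSign i (T.erase i) = posSign i T := by simp [posSign_erase hi]
      simp [contractInt, hi, Finset.insert_erase hi, hs, smul_smul, posSign_mul_self]
    · intro j _ hji
      simp [contractInt, hi, hji.symm]
  · have h0 := congrFun hω (insert i T)
    simp only [totalExtDeriv, Pi.zero_apply, Finset.sum_insert hi, Finset.erase_insert hi] at h0
    have h1 := congrArg (fun x => posSign i (insert i T) • J x) h0
    simp only [map_add, map_zsmul, map_sum, smul_add, smul_smul, posSign_mul_self, one_smul,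
      Finset.smul_sum, map_zero, smul_zero] at h1
    have h2 : ∑ j ∈ T, posSign j T • D j (contractInt i J ω (T.erase j)) =
        -∑ j ∈ T, (posSign i (insert i T) * posSign j (insert i T)) •
          J (D j (ω ((insert i T).erase j))) := by
      rw [← Finset.sum_neg_distrib]
      refine Finset.sum_congr rfl fun j hj => ?_
      have hji : j ≠ i := fun h => hi (h ▸ hj)
      have hc : J (D j (ω ((insert i T).erase j))) = D j (J (ω ((insert i T).erase j))) :=
        (LinearMap.congr_fun (hJ j hji) _).symm
      have hTj : insert i (T.erase j) = (insert i T).erase j :=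
        (Finset.erase_insert_of_ne hji.symm).symm
      have hs1 : posSign j T = (if i < j then -1 else 1) * posSign j (insert i T) := by
        conv_lhs => rw [← Finset.erase_insert hi]
        exact posSign_erase (Finset.mem_insert_self i T)
      have hs2 : posSign i (T.erase j) = (if j < i then -1 else 1) * posSign i (insert i T) := by
        rw [posSign_erase hj]
        congr 1
        conv_lhs => rw [← Finset.erase_insert hi]
        rw [posSign_erase (Finset.mem_insert_self i T)]
        simp
      rw [contractInt, if_neg (by simp [hi]), map_zsmul, smul_smul, hTj, hc, hs1, hs2, ← neg_smul]
      congr 1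
      rcases lt_or_gt_of_ne hji with h | h
      · simp [h, h.not_gt, mul_comm]
      · simp [h, h.not_gt, mul_comm]
    rw [h2, if_neg hi, ← eq_neg_of_add_eq_zero_left h1]
    simp

theorem totalExtDeriv_homotopyDefect {D : Fin n → Module.End K M}
    (hD : ∀ i j, Commute (D i) (D j)) {i : Fin n} {J : Module.End K M}
    (hJ : ∀ j, j ≠ i → Commute (D j) J) (hDi : (1 - D i * J) * D i = 0)
    (ω : Finset (Fin n) → M) :
    totalExtDeriv D (homotopyDefect i (D i) J ω) = homotopyDefect i (D i) J (totalExtDeriv D ω) := by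
  have key : ∀ T : Finset (Fin n), ∀ j ∈ T,
      D j (homotopyDefect i (D i) J ω (T.erase j)) =
        (if i ∈ T then 1 - D i * J else 1 - J * D i) (D j (ω (T.erase j))) := by
    intro T j hj
    rcases eq_or_ne j i with rfl | hji
    · have h1 : D j * (1 - J * D j) = 0 := by rw [← hDi]; noncomm_ring
      simp only [homotopyDefect, Finset.notMem_erase, if_false, hj, if_true]
      exact (LinearMap.congr_fun h1 _).trans (LinearMap.congr_fun hDi _).symm
    · have h1 : Commute (D j) (1 - D i * J) :=
        (Commute.one_right _).sub_right ((hD j i).mul_right (hJ j hji))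
      have h2 : Commute (D j) (1 - J * D i) :=
        (Commute.one_right _).sub_right ((hJ j hji).mul_right (hD j i))
      simp only [homotopyDefect, Finset.mem_erase, hji.symm, ne_eq, not_false_eq_true, true_and]
      split_ifs
      · exact LinearMap.congr_fun h1 _
      · exact LinearMap.congr_fun h2 _
  funext T
  have h3 : homotopyDefect i (D i) J (totalExtDeriv D ω) T =
      (if i ∈ T then 1 - D i * J else 1 - J * D i) (totalExtDeriv D ω T) := by
    unfold homotopyDefect; split_ifs <;> rfl
  rw [h3]
  simp only [totalExtDeriv, map_sum, map_zsmul]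
  exact Finset.sum_congr rfl fun j hj => by rw [key T j hj]

/-- The product `∏_{i ∈ T} D_i^{p-1}` of commuting operators. -/
noncomputable def pdProd (D : Fin n → Module.End K M) (hD : ∀ i j, Commute (D i) (D j)) (p : ℕ)
    (T : Finset (Fin n)) : Module.End K M :=
  T.noncommProd (fun i => D i ^ (p - 1)) fun i _ j _ _ => (hD i j).pow_pow _ _

theorem pdProd_eq_erase_mul {D : Fin n → Module.End K M} (hD : ∀ i j, Commute (D i) (D j)) (p : ℕ)
    {T : Finset (Fin n)} {i : Fin n} (hi : i ∈ T) :
    pdProd D hD p T = pdProd D hD p (T.erase i) * D i ^ (p - 1) :=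
  (Finset.noncommProd_erase_mul T hi _ _).symm

theorem commute_pdProd {D : Fin n → Module.End K M} (hD : ∀ i j, Commute (D i) (D j)) (p : ℕ)
    {T : Finset (Fin n)} {X : Module.End K M} (hX : ∀ i ∈ T, Commute (D i) X) :
    Commute (pdProd D hD p T) X :=
  (Finset.noncommProd_commute _ _ _ _ fun i hi => ((hX i hi).pow_left _).symm).symm

theorem pdProd_totalExtDeriv {D : Fin n → Module.End K M} (hD : ∀ i j, Commute (D i) (D j)) {p : ℕ}
    (hp : 0 < p) (hDp : ∀ i, D i ^ p = 0) (η : Finset (Fin n) → M) (T : Finset (Fin n)) :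
    pdProd D hD p T (totalExtDeriv D η T) = 0 := by
  simp only [totalExtDeriv, map_sum, map_zsmul]
  refine Finset.sum_eq_zero fun j hj => ?_
  have h : pdProd D hD p T * D j = 0 := by
    rw [pdProd_eq_erase_mul hD p hj, mul_assoc, ← pow_succ, Nat.sub_add_cancel hp, hDp, mul_zero]
  have h' := LinearMap.congr_fun h (η (T.erase j))
  rw [Module.End.mul_apply] at h'
  rw [h']; simp

theorem exists_totalExtDeriv_eq {D J Y : Fin n → Module.End K M} (hD : ∀ i j, Commute (D i) (D j))
    {p : ℕ} (hp : 0 < p) (hDp : ∀ i, D i ^ p = 0)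
    (hDJ : ∀ i, D i * J i = 1 - Y i * D i ^ (p - 1))
    (hJ : ∀ i j, j ≠ i → Commute (D j) (J i)) (hY : ∀ i j, j ≠ i → Commute (D j) (Y i))
    {ω : Finset (Fin n) → M} (hω : totalExtDeriv D ω = 0)
    (hpω : ∀ T, pdProd D hD p T (ω T) = 0) : ∃ η, totalExtDeriv D η = ω := by
  have reduce : ∀ S : Finset (Fin n), ∃ η ω' : Finset (Fin n) → M,
      totalExtDeriv D η + ω' = ω ∧ totalExtDeriv D ω' = 0 ∧
        ∀ T, pdProd D hD p (T \ S) (ω' T) = 0 := by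
    intro S
    induction S using Finset.induction_on with
    | empty =>
      refine ⟨0, ω, ?_, hω, by simpa using hpω⟩
      funext T; simp [totalExtDeriv]
    | insert i S hi ih =>
      obtain ⟨η, ω', h1, h2, h3⟩ := ih
      have hC : 1 - D i * J i = Y i * D i ^ (p - 1) := by rw [hDJ]; abel
      refine ⟨η + contractInt i (J i) ω', homotopyDefect i (D i) (J i) ω', ?_, ?_, ?_⟩
      · rw [totalExtDeriv_add, add_assoc, totalExtDeriv_contractInt (hJ i) h2, h1]
      · rw [totalExtDeriv_homotopyDefect hD (hJ i), h2]
        · funext T; simp [homotopyDefect]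
        · rw [hC, mul_assoc, ← pow_succ, Nat.sub_add_cancel hp, hDp, mul_zero]
      · intro T
        have hne : ∀ j ∈ T \ insert i S, j ≠ i := by
          intro j hj h
          simp [h] at hj
        unfold homotopyDefect
        split_ifs with hT
        · have hTS : i ∈ T \ S := by simp [hT, hi]
          have hcomm : Commute (pdProd D hD p (T \ insert i S)) (Y i) :=
            commute_pdProd hD p fun j hj => hY i j (hne j hj)
          have hx := h3 T
          have he : (T \ S).erase i = T \ insert i S := by
            ext j; simp only [Finset.mem_erase, Finset.mem_sdiff, Finset.mem_insert]; tauto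
          rw [pdProd_eq_erase_mul hD p hTS, he] at hx
          rw [hC, ← Module.End.mul_apply, ← mul_assoc, hcomm.eq, mul_assoc, Module.End.mul_apply,
            hx, map_zero]
        · have hcomm : Commute (pdProd D hD p (T \ insert i S)) (1 - J i * D i) :=
            commute_pdProd hD p fun j hj =>
              (Commute.one_right _).sub_right ((hJ i j (hne j hj)).mul_right (hD j i))
          have hx := h3 T
          rw [← Finset.sdiff_insert_of_notMem hT] at hx
          rw [← Module.End.mul_apply, hcomm.eq, Module.End.mul_apply, hx, map_zero]
  obtain ⟨η, ω', h1, -, h3⟩ := reduce Finset.univ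
  refine ⟨η, ?_⟩
  have hz : ω' = 0 := by
    funext T
    have hx := h3 T
    have he : T \ Finset.univ = ∅ := by simp
    rwa [he, show pdProd D hD p ∅ = 1 from Finset.noncommProd_empty _ _] at hx
  rw [← h1, hz, add_zero]

end ExteriorDerivative

section Weyl

variable {K A : Type} [Field K] [Ring A] [Algebra K A]

theorem mul_pow_succ_of_mul_eq_add_one {D Z : A} (h : D * Z = Z * D + 1) (m : ℕ) :
    D * Z ^ (m + 1) = Z ^ (m + 1) * D + ((m : K) + 1) • Z ^ m := by
  induction m with
  | zero => simp [h]
  | succ m ih =>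
    rw [pow_succ Z (m + 1), ← mul_assoc, ih, add_mul, mul_assoc, h, smul_mul_assoc, ← pow_succ]
    push_cast
    simp only [mul_add, mul_one, add_smul, one_smul, mul_assoc]
    abel

/-- Formal integration along `Z` by repeated integration by parts, up to order `m`. -/
noncomputable def formalIntegral (K : Type) {A : Type} [Field K] [Ring A] [Algebra K A]
    (D Z : A) (m : ℕ) : A :=
  ∑ k ∈ Finset.range m, ((-1) ^ k * ((k + 1).factorial : K)⁻¹) • (Z ^ (k + 1) * D ^ k)

theorem mul_formalIntegral {D Z : A} (h : D * Z = Z * D + 1) {m : ℕ}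
    (hm : ∀ k < m, ((k : K) + 1) ≠ 0) :
    D * formalIntegral K D Z m = 1 - ((-1) ^ m * (m.factorial : K)⁻¹) • (Z ^ m * D ^ m) := by
  induction m with
  | zero => simp [formalIntegral]
  | succ m ih =>
    have h0 := hm m (Nat.lt_succ_self m)
    have hc : ((-1) ^ m * ((m + 1).factorial : K)⁻¹) * ((m : K) + 1) =
        (-1) ^ m * (m.factorial : K)⁻¹ := by
      rw [Nat.factorial_succ]; push_cast
      rw [mul_inv, mul_assoc, mul_right_comm, inv_mul_cancel₀ h0, one_mul]
    have ih' := ih fun k hk => hm k (hk.trans (Nat.lt_succ_self m))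
    unfold formalIntegral at ih' ⊢
    rw [Finset.sum_range_succ, mul_add, ih', mul_smul_comm, ← mul_assoc,
      mul_pow_succ_of_mul_eq_add_one (K := K) h, add_mul, smul_mul_assoc, smul_add, smul_smul, hc,
      mul_assoc, ← pow_succ', pow_succ (-1 : K) m]
    simp only [mul_neg, mul_one, neg_mul, neg_smul]
    abel

theorem commute_formalIntegral {D Z X : A} (hD : Commute X D) (hZ : Commute X Z) (m : ℕ) :
    Commute X (formalIntegral K D Z m) :=
  Commute.sum_right _ _ _ fun k _ =>
    ((hZ.pow_right (k + 1)).mul_right (hD.pow_right k)).smul_right _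

end Weyl

section Derivations

variable {n : ℕ} {K R : Type} [Field K] [CommRing R] [Algebra K R]

theorem gpdSet_eq_pdProd (D : Fin n → Derivation K R R)
    (hD : ∀ i j, Commute (D i : Module.End K R) (D j : Module.End K R)) (p : ℕ)
    (T : Finset (Fin n)) (f : R) :
    gpdSet (fun i => D i) p T f = pdProd (fun i => (D i : Module.End K R)) hD p T f := by
  have h1 : ∀ l : List (Fin n), l.foldr (fun i g => (D i)^[p - 1] g) f =
      (l.map fun i => (D i : Module.End K R) ^ (p - 1)).prod f := by
    intro l
    induction l with
    | nil => rfl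
    | cons i l ih =>
      rw [List.foldr_cons, ih, List.map_cons, List.prod_cons, Module.End.mul_apply,
        Module.End.pow_apply]
      rfl
  rw [gpdSet, h1, pdProd]
  congr 1
  have h2 := Finset.noncommProd_toFinset (T.sort (· ≤ ·))
    (fun i => (D i : Module.End K R) ^ (p - 1))
    (fun i _ j _ _ => (hD i j).pow_pow _ _) (T.sort_nodup (· ≤ ·))
  rw [← h2]
  exact Finset.noncommProd_congr (Finset.sort_toFinset _ _) (fun _ _ => rfl) _

/-- Extension by zero of a homogeneous form to a form of mixed degree. -/
def GForm.extend {r : ℕ} (ω : GForm R n r) : Finset (Fin n) → R :=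
  fun T => if h : T.card = r then ω ⟨T, h⟩ else 0

theorem GForm.extend_apply {r : ℕ} (ω : GForm R n r) (T : {s : Finset (Fin n) // s.card = r}) :
    ω.extend T.1 = ω T := by
  simp [GForm.extend, T.2]

theorem gextd_restrict (D : Fin n → Derivation K R R) {r : ℕ} (η : Finset (Fin n) → R)
    (T : {s : Finset (Fin n) // s.card = r + 1}) :
    gextd (fun i => D i) (fun s => η s.1) T =
      totalExtDeriv (fun i => (D i : Module.End K R)) η T.1 := by
  rw [gextd, totalExtDeriv, ← Finset.sum_attach T.1]
  refine Finset.sum_congr rfl fun j _ => ?_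
  rw [posSign, zsmul_eq_mul]
  push_cast
  rfl

theorem gextd_apply (D : Fin n → Derivation K R R) {r : ℕ} (ω : GForm R n r)
    (T : {s : Finset (Fin n) // s.card = r + 1}) :
    gextd (fun i => D i) ω T = totalExtDeriv (fun i => (D i : Module.End K R)) ω.extend T.1 := by
  rw [← gextd_restrict]
  congr 1
  funext s
  exact (ω.extend_apply s).symm

theorem totalExtDeriv_extend (D : Fin n → Derivation K R R) {r : ℕ} (ω : GForm R n r) :
    totalExtDeriv (fun i => (D i : Module.End K R)) ω.extend =
      GForm.extend (gextd (fun i => D i) ω) := by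
  funext T
  by_cases hT : T.card = r + 1
  · rw [GForm.extend, dif_pos hT, gextd_apply]
  · rw [GForm.extend, dif_neg hT, totalExtDeriv]
    refine Finset.sum_eq_zero fun j hj => ?_
    have h : (T.erase j).card ≠ r := by
      have := Finset.card_erase_add_one hj
      omega
    simp [GForm.extend, h]

/-- The Poincaré lemma in characteristic `p` for a ring with commuting `p`-nilpotent derivations
dual to a system of coordinates. -/
theorem gextd_exact_iff_of_coordinates {p : ℕ} [CharP K p] (hp : 0 < p)
    (D : Fin n → Derivation K R R) (z : Fin n → R) (hDz : ∀ i, D i (z i) = 1)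
    (hDz' : ∀ i j, j ≠ i → D j (z i) = 0) (hD : ∀ i j f, D i (D j f) = D j (D i f))
    (hDp : ∀ i f, (D i)^[p] f = 0) {r : ℕ} (ω : GForm R n (r + 1)) :
    (∃ η : GForm R n r, gextd (fun i => D i) η = ω) ↔
      (gextd (fun i => D i) ω = 0 ∧
        ∀ T : {s : Finset (Fin n) // s.card = r + 1}, gpdSet (fun i => D i) p T.1 (ω T) = 0) := by
  have hc : ∀ i j, Commute (D i : Module.End K R) (D j : Module.End K R) :=
    fun i j => LinearMap.ext fun f => hD i j f
  have hpow : ∀ i, (D i : Module.End K R) ^ p = 0 :=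
    fun i => LinearMap.ext fun f => by rw [Module.End.pow_apply]; exact hDp i f
  constructor
  · rintro ⟨η, rfl⟩
    refine ⟨?_, fun T => ?_⟩
    · funext T
      rw [gextd_apply, ← totalExtDeriv_extend, totalExtDeriv_totalExtDeriv hc]
      rfl
    · rw [gpdSet_eq_pdProd D hc, gextd_apply]
      exact pdProd_totalExtDeriv hc hp hpow _ _
  · rintro ⟨hω, hpω⟩
    let Z : Fin n → Module.End K R := fun i => LinearMap.mulLeft K (z i)
    have hDZ : ∀ i, (D i : Module.End K R) * Z i = Z i * (D i : Module.End K R) + 1 := by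
      intro i
      ext f
      change D i (z i * f) = z i * D i f + f
      rw [Derivation.leibniz, hDz]
      simp
    have hDZ' : ∀ i j, j ≠ i → Commute (D j : Module.End K R) (Z i) := by
      intro i j hji
      refine LinearMap.ext fun f => ?_
      change D j (z i * f) = z i * D j f
      rw [Derivation.leibniz, hDz' i j hji]
      simp
    have hne : ∀ k < p - 1, ((k : K) + 1) ≠ 0 := by
      intro k hk h
      have h' : ((k + 1 : ℕ) : K) = 0 := by exact_mod_cast h
      rw [CharP.cast_eq_zero_iff K p] at h'
      have := Nat.le_of_dvd (Nat.succ_pos k) h'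
      omega
    obtain ⟨η, hη⟩ := exists_totalExtDeriv_eq (D := fun i => (D i : Module.End K R))
      (J := fun i => formalIntegral K (D i : Module.End K R) (Z i) (p - 1))
      (Y := fun i => ((-1) ^ (p - 1) * ((p - 1).factorial : K)⁻¹) • Z i ^ (p - 1))
      (ω := ω.extend) hc hp hpow
      (fun i => by rw [mul_formalIntegral (hDZ i) hne, smul_mul_assoc])
      (fun i j hji => commute_formalIntegral (hc j i) (hDZ' i j hji) _)
      (fun i j hji => ((hDZ' i j hji).pow_right _).smul_right _)
      (by
        rw [totalExtDeriv_extend, hω]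
        funext T
        simp [GForm.extend])
      (by
        intro T
        by_cases hT : T.card = r + 1
        · rw [← gpdSet_eq_pdProd D hc, ω.extend_apply ⟨T, hT⟩]
          exact hpω ⟨T, hT⟩
        · simp [GForm.extend, hT])
    refine ⟨fun s => η s.1, ?_⟩
    funext T
    rw [gextd_restrict, hη, ω.extend_apply]

end Derivations

section Polynomials

variable {σ K : Type} [Field K]

theorem iterate_pderiv_monomial [DecidableEq σ] (i : σ) (k : ℕ) (s : σ →₀ ℕ) (a : K) :
    (pderiv i)^[k] (monomial s a) =
      monomial (s - Finsupp.single i k) (a * ((s i).descFactorial k : K)) := by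
  induction k with
  | zero => simp
  | succ k ih =>
    rw [Function.iterate_succ_apply', ih, pderiv_monomial, Nat.descFactorial_succ, tsub_tsub,
      ← Finsupp.single_add]
    simp [mul_left_comm, mul_comm]

theorem iterate_pderiv_eq_zero (p : ℕ) [CharP K p] (hp : 0 < p) (i : σ) (f : MvPolynomial σ K) :
    (pderiv i)^[p] f = 0 := by
  classical
  have h : ((pderiv i : Derivation K (MvPolynomial σ K) (MvPolynomial σ K)) :
      Module.End K (MvPolynomial σ K)) ^ p = 0 := by
    refine MvPolynomial.linearMap_ext fun s => LinearMap.ext fun a => ?_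
    have hz : ((s i).descFactorial p : K) = 0 := by
      rw [CharP.cast_eq_zero_iff K p]
      exact (Nat.dvd_factorial hp le_rfl).trans (Nat.factorial_dvd_descFactorial _ _)
    have := iterate_pderiv_monomial i p s a
    rw [hz, mul_zero, map_zero] at this
    rw [LinearMap.comp_apply, Module.End.pow_apply]
    exact this
  have := LinearMap.congr_fun h f
  rw [Module.End.pow_apply] at this
  exact this

theorem pderiv_comm (i j : σ) (f : MvPolynomial σ K) :
    pderiv i (pderiv j f) = pderiv j (pderiv i f) := by
  classical
  have h : ⁅(pderiv i : Derivation K (MvPolynomial σ K) (MvPolynomial σ K)),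
      (pderiv j : Derivation K (MvPolynomial σ K) (MvPolynomial σ K))⁆ = 0 := by
    refine MvPolynomial.derivation_ext fun k => ?_
    rw [Derivation.commutator_apply]
    simp only [pderiv_X, Derivation.coe_zero, Pi.zero_apply]
    simp only [Pi.single_apply]
    split_ifs <;> simp
  have := congrArg (fun E => E f) h
  rw [Derivation.commutator_apply] at this
  exact sub_eq_zero.mp this

end Polynomials

section FractionField

variable {A F : Type} [CommRing A] [IsDomain A] [Field F] [Algebra A F] [IsFractionRing A F]

theorem exists_pow_mul_eq_algebraMap {p : ℕ} (hp : 0 < p) (x : F) :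
    ∃ (a : A) (b : F), b ≠ 0 ∧ b ^ p * x = algebraMap A F a := by
  obtain ⟨a, b, hb, rfl⟩ := IsFractionRing.div_surjective (A := A) x
  have hb' : algebraMap A F b ≠ 0 :=
    IsFractionRing.to_map_ne_zero_of_mem_nonZeroDivisors hb
  refine ⟨b ^ (p - 1) * a, algebraMap A F b, hb', ?_⟩
  obtain ⟨q, rfl⟩ := Nat.exists_eq_add_of_lt hp
  simp only [zero_add, Nat.add_sub_cancel, map_mul, map_pow]
  field_simp
  ring

theorem derivation_pow_mul {K F : Type} [Field K] [Field F] [Algebra K F] (p : ℕ) [CharP K p]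
    (D : Derivation K F F) (b x : F) : D (b ^ p * x) = b ^ p * D x := by
  have hp : (p : F) = 0 := by
    rw [← map_natCast (algebraMap K F), CharP.cast_eq_zero, map_zero]
  rw [Derivation.leibniz, Derivation.leibniz_pow]
  simp [hp]

end FractionField

/-- **Positive characteristic Poincaré Lemma.** Let `K` be a field of
characteristic `p > 0` and let `R` be `K[z_1,…,z_n]` or `K(z_1,…,z_n)`. An `r`-form
(`r = r₀+1 ≥ 1`) over `R` is exact iff it is `p`-closed, i.e. `dω = 0` and
`∂_{i_1}^{p-1} ⋯ ∂_{i_r}^{p-1}(a_I) = 0` for every multi-index `I = (i_1 < … < i_r)`.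
For the rational function field, the partial derivatives are formalized as any family of
derivations on the fraction field extending the formal `∂_j` of `K[z]`. -/
theorem positive_characteristic_poincare_lemma
    (K : Type) [Field K] (p n r : ℕ) [CharP K p] (hp : 0 < p) :
    (∀ ω : GForm (MvPolynomial (Fin n) K) n (r + 1),
      (∃ η : GForm (MvPolynomial (Fin n) K) n r, gextd (pderivFam K n) η = ω) ↔
        (gextd (pderivFam K n) ω = 0 ∧
          ∀ T : {s : Finset (Fin n) // s.card = r + 1},
            gpdSet (pderivFam K n) p T.1 (ω T) = 0)) ∧
    (∀ D : Fin n → FractionRing (MvPolynomial (Fin n) K) →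
        FractionRing (MvPolynomial (Fin n) K),
      (∀ j a b, D j (a + b) = D j a + D j b) →
      (∀ j a b, D j (a * b) = a * D j b + b * D j a) →
      (∀ (j : Fin n) (g : MvPolynomial (Fin n) K),
        D j (algebraMap (MvPolynomial (Fin n) K) (FractionRing (MvPolynomial (Fin n) K)) g) =
          algebraMap (MvPolynomial (Fin n) K) (FractionRing (MvPolynomial (Fin n) K))
            (pderiv j g)) →
      ∀ ω : GForm (FractionRing (MvPolynomial (Fin n) K)) n (r + 1),
        (∃ η : GForm (FractionRing (MvPolynomial (Fin n) K)) n r, gextd D η = ω) ↔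
          (gextd D ω = 0 ∧
            ∀ T : {s : Finset (Fin n) // s.card = r + 1},
              gpdSet D p T.1 (ω T) = 0)) := by
  refine ⟨fun ω => ?_, fun D hadd hmul halg ω => ?_⟩
  · exact gextd_exact_iff_of_coordinates hp (fun i => pderiv i) X (fun i => pderiv_X_self i)
      (fun i j hji => pderiv_X_of_ne hji.symm) (fun i j f => pderiv_comm i j f)
      (fun i f => iterate_pderiv_eq_zero p hp i f) ω
  · let F := FractionRing (MvPolynomial (Fin n) K)
    have hsmul : ∀ (j : Fin n) (c : K) (x : F), D j (c • x) = c • D j x := by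
      intro j c x
      have hC : algebraMap K F c = algebraMap (MvPolynomial (Fin n) K) F (C c) :=
        IsScalarTower.algebraMap_apply K (MvPolynomial (Fin n) K) F c
      rw [Algebra.smul_def, Algebra.smul_def, hC, hmul, halg, pderiv_C]
      simp
    let E : Fin n → Derivation K F F := fun j =>
      Derivation.mk' { toFun := D j, map_add' := hadd j, map_smul' := hsmul j } (hmul j)
    have hE : ∀ j g, E j (algebraMap (MvPolynomial (Fin n) K) F g) =
        algebraMap (MvPolynomial (Fin n) K) F (pderiv j g) := halg
    refine gextd_exact_iff_of_coordinates hp E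
      (fun i => algebraMap (MvPolynomial (Fin n) K) F (X i)) (fun i => ?_) (fun i j hji => ?_)
      (fun i j f => ?_) (fun i f => ?_) ω
    · rw [hE, pderiv_X_self, map_one]
    · rw [hE, pderiv_X_of_ne hji.symm, map_zero]
    · obtain ⟨a, b, hb, hab⟩ := exists_pow_mul_eq_algebraMap (A := MvPolynomial (Fin n) K) hp f
      refine mul_left_cancel₀ (pow_ne_zero p hb) ?_
      simp only [← derivation_pow_mul p, hab, hE, pderiv_comm i j]
    · obtain ⟨a, b, hb, hab⟩ := exists_pow_mul_eq_algebraMap (A := MvPolynomial (Fin n) K) hp f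
      have hleft : ∀ (k : ℕ), b ^ p * (E i)^[k] f = (E i)^[k] (b ^ p * f) := by
        intro k
        induction k with
        | zero => rfl
        | succ k ih =>
          rw [Function.iterate_succ_apply', Function.iterate_succ_apply', ← ih,
            derivation_pow_mul p]
      have hright : ∀ (k : ℕ), (E i)^[k] (algebraMap (MvPolynomial (Fin n) K) F a) =
          algebraMap (MvPolynomial (Fin n) K) F ((pderiv i)^[k] a) := by
        intro k
        induction k with
        | zero => rfl
        | succ k ih =>
          rw [Function.iterate_succ_apply', Function.iterate_succ_apply', ih, hE]
      refine mul_left_cancel₀ (pow_ne_zero p hb) ?_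
      rw [hleft, hab, hright, iterate_pderiv_eq_zero p hp, map_zero, mul_zero]
end

section
/- Let K be a field of characteristic p > 0. The map γ_0 : Ω^r_{K(z)/K} → H^r_{K(z)} = Z^r/B^r sending a_I(z) dz_I to the class of a_I(z^p)·z_I^{p−1} dz_I is a bijection (an isomorphism of K(z)-vector spaces, where K(z) acts on H^r via a(z) ↦ a(z^p)). -/
open MvPolynomial

/-- The coefficients of a form, extended by zero to all finsets. -/
def GForm.coeffs {R : Type} [Zero R] {n r : ℕ} (u : GForm R n r) (s : Finset (Fin n)) : R :=
  if h : s.card = r then u ⟨s, h⟩ else 0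

/-- The sign `(-1)^{#{k ∈ s : k < j}}`. -/
def positionSign (R : Type) [CommRing R] {n : ℕ} (j : Fin n) (s : Finset (Fin n)) : R :=
  (-1 : R) ^ ((s.filter (fun k => k < j)).card)

/-- Contraction of a form with the `i`-th basis vector. -/
def gcontract {R : Type} [CommRing R] {n r : ℕ} (i : Fin n) (u : GForm R n (r + 1)) :
    GForm R n r :=
  fun S => if i ∈ S.1 then 0 else positionSign R i S.1 * u.coeffs (insert i S.1)

section Koszul

variable {R : Type} [CommRing R] {n r : ℕ}

lemma gextd_eq_sum (D : Fin n → R → R) (u : GForm R n r)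
    (T : {s : Finset (Fin n) // s.card = r + 1}) :
    gextd D u T = ∑ j ∈ T.1, positionSign R j T.1 * D j (u.coeffs (T.1.erase j)) := by
  rw [gextd, ← Finset.sum_attach T.1]
  refine Finset.sum_congr rfl fun j _ => ?_
  have h : (T.1.erase j.1).card = r := by rw [Finset.card_erase_of_mem j.2, T.2]; rfl
  simp [GForm.coeffs, h, positionSign]

lemma positionSign_mul_self (j : Fin n) (s : Finset (Fin n)) :
    positionSign R j s * positionSign R j s = 1 := by
  rw [positionSign, ← mul_pow]; simp

lemma positionSign_erase_self (j : Fin n) (s : Finset (Fin n)) :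
    positionSign R j (s.erase j) = positionSign R j s := by
  have : (s.erase j).filter (fun k => k < j) = s.filter (fun k => k < j) := by
    ext k; simp only [Finset.mem_filter, Finset.mem_erase]; grind
  rw [positionSign, this, positionSign]

lemma positionSign_insert (i j : Fin n) (s : Finset (Fin n)) (hi : i ∉ s) :
    positionSign R j (insert i s) = (if i < j then -1 else 1) * positionSign R j s := by
  unfold positionSign
  rw [Finset.filter_insert]
  split_ifs
  · rw [Finset.card_insert_of_notMem (by simp [hi]), pow_succ']
  · rw [one_mul]

lemma positionSign_exchange {i j : Fin n} {s : Finset (Fin n)} (hi : i ∉ s) (hj : j ∈ s) :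
    positionSign R i s * positionSign R j (insert i s) =
      -(positionSign R j s * positionSign R i (s.erase j)) := by
  have hij : i ≠ j := fun h => hi (h ▸ hj)
  have h1 := positionSign_insert (R := R) j i (s.erase j) (Finset.notMem_erase j s)
  rw [Finset.insert_erase hj] at h1
  rw [positionSign_insert i j s hi, h1]
  rcases lt_or_gt_of_ne hij with h | h
  · rw [if_pos h, if_neg h.not_gt]; ring
  · rw [if_neg h.not_gt, if_pos h]; ring

lemma map_positionSign_mul (A : AddMonoid.End R) (j : Fin n) (s : Finset (Fin n)) (x : R) :
    A (positionSign R j s * x) = positionSign R j s * A x := by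
  unfold positionSign
  rcases neg_one_pow_eq_or R (s.filter (fun k => k < j)).card with h | h <;> simp [h]

variable (θ : Fin n → AddMonoid.End R)

lemma gextd_add (u v : GForm R n r) :
    gextd (fun j => θ j) (u + v) = gextd (fun j => θ j) u + gextd (fun j => θ j) v := by
  ext T
  simp [gextd, mul_add, Finset.sum_add_distrib]

lemma gextd_neg (u : GForm R n r) :
    gextd (fun j => θ j) (-u) = -gextd (fun j => θ j) u := by
  ext T
  simp [gextd]

lemma gextd_comp_of_commute {A : AddMonoid.End R} (hA : ∀ j, Commute A (θ j))
    (u : GForm R n r) (T : {s : Finset (Fin n) // s.card = r + 1}) :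
    gextd (fun j => θ j) (fun S => A (u S)) T = A (gextd (fun j => θ j) u T) := by
  unfold gextd
  rw [map_sum]
  refine Finset.sum_congr rfl fun j _ => ?_
  rw [← positionSign, map_positionSign_mul]
  congr 1
  exact (DFunLike.congr_fun (hA j) _).symm

lemma gextd_gcontract_add_gcontract_gextd (i : Fin n) (u : GForm R n (r + 1))
    (T : {s : Finset (Fin n) // s.card = r + 1}) :
    gextd (fun j => θ j) (gcontract i u) T + gcontract i (gextd (fun j => θ j) u) T =
      θ i (u T) := by
  have hcoeffs : ∀ j ∈ T.1, (gcontract i u).coeffs (T.1.erase j) =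
      if i ∈ T.1.erase j then 0
      else positionSign R i (T.1.erase j) * u.coeffs (insert i (T.1.erase j)) := by
    intro j hj
    have h : (T.1.erase j).card = r := by rw [Finset.card_erase_of_mem hj, T.2]; rfl
    rw [GForm.coeffs, dif_pos h, gcontract]
  have hT : u.coeffs T.1 = u T := by rw [GForm.coeffs, dif_pos T.2]
  rw [gextd_eq_sum]
  by_cases hi : i ∈ T.1
  · rw [gcontract, if_pos hi, add_zero, Finset.sum_eq_single i]
    · rw [hcoeffs i hi, if_neg (Finset.notMem_erase i _), map_positionSign_mul,
        positionSign_erase_self, ← mul_assoc, positionSign_mul_self, one_mul,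
        Finset.insert_erase hi, hT]
    · intro j hj hji
      rw [hcoeffs j hj, if_pos (Finset.mem_erase.2 ⟨hji.symm, hi⟩), map_zero, mul_zero]
    · exact fun h => absurd hi h
  · have hc : (insert i T.1).card = r + 1 + 1 := by
      rw [Finset.card_insert_of_notMem hi, T.2]
    rw [gcontract, if_neg hi, GForm.coeffs, dif_pos hc, gextd_eq_sum, Finset.sum_insert hi,
      mul_add, Finset.erase_insert hi, positionSign_insert i i _ hi, if_neg (lt_irrefl i), one_mul,
      ← mul_assoc, positionSign_mul_self, one_mul, hT, Finset.mul_sum, add_left_comm,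
      ← Finset.sum_add_distrib, Finset.sum_eq_zero, add_zero]
    intro j hj
    have hij : i ≠ j := fun h => hi (h ▸ hj)
    rw [hcoeffs j hj, if_neg (fun h => hi (Finset.mem_of_mem_erase h)), map_positionSign_mul,
      ← mul_assoc, ← mul_assoc, positionSign_exchange hi hj, Finset.erase_insert_of_ne hij]
    ring

variable {θ} {p : ℕ}

lemma exists_horizontal_cohomologous (hp : 2 ≤ p) (hcomm : ∀ i j, Commute (θ i) (θ j))
    (hpow : ∀ i, θ i ^ p = θ i) (s : Finset (Fin n)) (u : GForm R n (r + 1))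
    (hu : gextd (fun j => θ j) u = 0) :
    ∃ (v : GForm R n (r + 1)) (h : GForm R n r), v = u + gextd (fun j => θ j) h ∧
      gextd (fun j => θ j) v = 0 ∧ ∀ i ∈ s, ∀ T, θ i (v T) = 0 := by
  classical
  induction s using Finset.induction_on with
  | empty =>
    refine ⟨u, 0, ?_, hu, by simp⟩
    ext T
    simp [gextd]
  | insert i s _ ih =>
    obtain ⟨v, h, hv, hdv, hs⟩ := ih
    obtain ⟨q, rfl⟩ := Nat.exists_eq_add_of_le' hp
    have hA : ∀ k j, Commute (θ i ^ k) (θ j) := fun k j => (hcomm i j).pow_left k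
    let w : GForm R n (r + 1) := fun S => (θ i ^ q) (v S)
    let w' : GForm R n (r + 1) := fun S => (θ i ^ (q + 1)) (v S)
    have hdw : gextd (fun j => θ j) w = 0 := by
      ext T
      rw [gextd_comp_of_commute θ (hA q), hdv]
      simp
    have hdw' : gextd (fun j => θ j) w' = 0 := by
      ext T
      rw [gextd_comp_of_commute θ (hA (q + 1)), hdv]
      simp
    have hw : w' = gextd (fun j => θ j) (gcontract i w) := by
      ext T
      have := gextd_gcontract_add_gcontract_gextd θ i w T
      rw [hdw] at this
      have h0 : gcontract i (0 : GForm R n (r + 1 + 1)) T = 0 := by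
        simp [gcontract, GForm.coeffs]
      rw [h0, add_zero] at this
      rw [this]
      simp only [w', w, pow_succ']
      rfl
    refine ⟨v + -w', h + -gcontract i w, ?_, ?_, ?_⟩
    · rw [gextd_add, gextd_neg, ← hw, hv, add_assoc]
    · rw [gextd_add, gextd_neg, hdv, hdw', neg_zero, add_zero]
    · intro k hk T
      have hkv : θ k ((v + -w') T) = θ k (v T) - (θ i ^ (q + 1)) (θ k (v T)) := by
        rw [Pi.add_apply, Pi.neg_apply, map_add, map_neg, ← sub_eq_add_neg]
        congr 1
        exact (DFunLike.congr_fun (hA (q + 1) k) (v T)).symm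
      rw [hkv]
      rcases Finset.mem_insert.1 hk with rfl | hk
      · have := DFunLike.congr_fun (hpow k) (v T)
        rw [show q + 2 = q + 1 + 1 from rfl, pow_succ] at this
        rw [sub_eq_zero]
        exact this.symm
      · rw [hs k hk T, map_zero, sub_zero]

lemma eq_zero_of_horizontal_of_exact (hp : 2 ≤ p) (hcomm : ∀ i j, Commute (θ i) (θ j))
    (hpow : ∀ i, θ i ^ p = θ i) (u : GForm R n (r + 1)) (hu : ∀ i T, θ i (u T) = 0)
    (hex : ∃ η, u = gextd (fun j => θ j) η) : u = 0 := by
  classical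
  have key : ∀ s : Finset (Fin n), ∃ η : GForm R n r, u = gextd (fun j => θ j) η ∧
      ∀ i ∈ s, ∀ S, θ i (η S) = 0 := by
    intro s
    induction s using Finset.induction_on with
    | empty =>
      obtain ⟨η, hη⟩ := hex
      exact ⟨η, hη, by simp⟩
    | insert i s _ ih =>
      obtain ⟨η, hη, hs⟩ := ih
      obtain ⟨q, rfl⟩ := Nat.exists_eq_add_of_le' hp
      have hA : ∀ j, Commute (θ i ^ (q + 1)) (θ j) := fun j => (hcomm i j).pow_left (q + 1)
      refine ⟨η + -fun S => (θ i ^ (q + 1)) (η S), ?_, ?_⟩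
      · rw [gextd_add, gextd_neg, ← hη]
        ext T
        rw [Pi.add_apply, Pi.neg_apply, gextd_comp_of_commute θ hA, ← hη, pow_succ]
        simp [hu]
      · intro k hk S
        have hkη : θ k ((η + -fun S => (θ i ^ (q + 1)) (η S)) S) =
            θ k (η S) - (θ i ^ (q + 1)) (θ k (η S)) := by
          rw [Pi.add_apply, Pi.neg_apply, map_add, map_neg, ← sub_eq_add_neg]
          congr 1
          exact (DFunLike.congr_fun (hA k) (η S)).symm
        rw [hkη]
        rcases Finset.mem_insert.1 hk with rfl | hk
        · have := DFunLike.congr_fun (hpow k) (η S)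
          rw [show q + 2 = q + 1 + 1 from rfl, pow_succ] at this
          rw [sub_eq_zero]
          exact this.symm
        · rw [hs k hk S, map_zero, sub_zero]
  obtain ⟨η, rfl, hη⟩ := key Finset.univ
  ext T
  simp [gextd, hη]

end Koszul

section Polynomial

variable {K : Type} [Field K] {p n : ℕ} [CharP K p]

lemma MvPolynomial.exists_expand_eq_of_pderiv_eq_zero (g : MvPolynomial (Fin n) K)
    (hg : ∀ j, pderiv j g = 0) : ∃ h, expand p h = g := by
  have hdvd : ∀ m ∈ g.support, ∀ j, p ∣ m j := by
    intro m hm j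
    by_cases hmj : m j = 0
    · simp [hmj]
    have h := congrArg (coeff (m - Finsupp.single j 1)) (hg j)
    have hm1 : m - Finsupp.single j 1 + Finsupp.single j 1 = m :=
      tsub_add_cancel_of_le (Finsupp.single_le_iff.2 (Nat.one_le_iff_ne_zero.2 hmj))
    rw [coeff_pderiv, hm1, coeff_zero] at h
    have h2 := (mul_eq_zero.1 h).resolve_left (mem_support_iff.1 hm)
    rw [← CharP.cast_eq_zero_iff K p]
    have : ((m j : ℕ) : K) = (((m - Finsupp.single j 1 : Fin n →₀ ℕ) j : ℕ) : K) + 1 := by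
      rw [← Nat.cast_succ]
      congr 1
      simp; omega
    rw [this, h2]
  refine ⟨∑ m ∈ g.support, monomial (m.mapRange (· / p) (by simp)) (coeff m g), ?_⟩
  rw [map_sum]
  conv_rhs => rw [g.as_sum]
  refine Finset.sum_congr rfl fun m hm => ?_
  have hm' : p • m.mapRange (· / p) (by simp) = m := by
    ext j
    simp [Nat.mul_div_cancel' (hdvd m hm j)]
  rw [expand_monomial, hm']

lemma MvPolynomial.pderiv_pow_char (b : MvPolynomial (Fin n) K) (j : Fin n) :
    pderiv j (b ^ p) = 0 := by
  rw [Derivation.leibniz_pow]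
  simp

lemma MvPolynomial.pderiv_expand_char (b : MvPolynomial (Fin n) K) (j : Fin n) :
    pderiv j (expand p b) = 0 := by
  induction b using MvPolynomial.induction_on with
  | C a => simp
  | add a b ha hb => simp [ha, hb]
  | mul_X a i ha => rw [map_mul, expand_X, Derivation.leibniz, ha, pderiv_pow_char]; simp

end Polynomial

section LogDerivation

variable {K F : Type} [Field K] {n : ℕ} [Field F] [Algebra K F] [Algebra (MvPolynomial (Fin n) K) F]

local notation "ι" => algebraMap (MvPolynomial (Fin _) _)

/-- The logarithmic derivation `z_j ∂_j` attached to a derivation `∂_j` of `K(z)`. -/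
noncomputable def logDerivation (δ : Fin n → Derivation K F F) (j : Fin n) : AddMonoid.End F :=
  (ι F (X j : MvPolynomial (Fin n) K) • δ j : Derivation K F F).toLinearMap.toAddMonoidHom

lemma logDerivation_apply (δ : Fin n → Derivation K F F) (j : Fin n) (f : F) :
    logDerivation δ j f = ι F (X j : MvPolynomial (Fin n) K) * δ j f := rfl

variable {δ : Fin n → Derivation K F F}

lemma logDerivation_algebraMap
    (hδ : ∀ (j : Fin n) (g : MvPolynomial (Fin n) K), δ j (ι F g) = ι F (pderiv j g)) (j : Fin n)
    (g : MvPolynomial (Fin n) K) : logDerivation δ j (ι F g) = ι F (X j * pderiv j g) := by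
  rw [logDerivation_apply, hδ, map_mul]

lemma prod_mul_gextd
    (hδ : ∀ (j : Fin n) (g : MvPolynomial (Fin n) K), δ j (ι F g) = ι F (pderiv j g))
    {r : ℕ} (ω : GForm F n r) (T : {s : Finset (Fin n) // s.card = r + 1}) :
    (∏ i ∈ T.1, ι F (X i : MvPolynomial (Fin n) K)) * gextd (fun j => δ j) ω T =
      gextd (fun j => logDerivation δ j)
        (fun S => (∏ i ∈ S.1, ι F (X i : MvPolynomial (Fin n) K)) * ω S) T := by
  unfold gextd
  rw [Finset.mul_sum]
  refine Finset.sum_congr rfl fun j _ => ?_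
  have hconst : δ j.1 (∏ i ∈ T.1.erase j.1, ι F (X i : MvPolynomial (Fin n) K)) = 0 := by
    refine Finset.prod_induction _ (fun x => δ j.1 x = 0) (fun a b ha hb => ?_) ?_ fun i hi => ?_
    · rw [Derivation.leibniz, ha, hb, smul_zero, smul_zero, add_zero]
    · exact Derivation.map_one_eq_zero _
    rw [hδ, pderiv_X_of_ne (Finset.ne_of_mem_erase hi), map_zero]
  beta_reduce
  rw [← Finset.mul_prod_erase _ _ j.2, logDerivation_apply, Derivation.leibniz, hconst, smul_zero,
    add_zero]
  simp only [smul_eq_mul]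
  ring

lemma logDerivation_pow_monomial
    (hδ : ∀ (j : Fin n) (g : MvPolynomial (Fin n) K), δ j (ι F g) = ι F (pderiv j g)) (j : Fin n)
    (m : Fin n →₀ ℕ) (a : K) (k : ℕ) :
    (logDerivation δ j ^ k) (ι F (monomial m a)) = ι F (monomial m (a * (m j : K) ^ k)) := by
  induction k with
  | zero => simp
  | succ k ih =>
    rw [pow_succ', AddMonoid.End.coe_mul, Function.comp_apply, ih, logDerivation_algebraMap hδ,
      X_mul_pderiv_monomial, pow_succ, ← map_nsmul, nsmul_eq_mul]
    congr 2
    ring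

variable {p : ℕ} [CharP K p]

lemma logDerivation_mul_pow_char
    (hδ : ∀ (j : Fin n) (g : MvPolynomial (Fin n) K), δ j (ι F g) = ι F (pderiv j g))
    (j : Fin n) (f : F) (b : MvPolynomial (Fin n) K) :
    logDerivation δ j (f * ι F (b ^ p)) = logDerivation δ j f * ι F (b ^ p) := by
  rw [logDerivation_apply, logDerivation_apply, Derivation.leibniz, hδ, pderiv_pow_char]
  simp only [map_zero, smul_eq_mul]
  ring

lemma logDerivation_pow_mul_pow_char
    (hδ : ∀ (j : Fin n) (g : MvPolynomial (Fin n) K), δ j (ι F g) = ι F (pderiv j g)) (j : Fin n)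
    (f : F) (b : MvPolynomial (Fin n) K) (k : ℕ) :
    (logDerivation δ j ^ k) (f * ι F (b ^ p)) = (logDerivation δ j ^ k) f * ι F (b ^ p) := by
  induction k with
  | zero => simp
  | succ k ih =>
    rw [pow_succ', AddMonoid.End.coe_mul, Function.comp_apply, ih, logDerivation_mul_pow_char hδ]
    rfl

end LogDerivation

section FractionField

variable {K F : Type} [Field K] {n : ℕ} [Field F] [Algebra (MvPolynomial (Fin n) K) F]
  [IsFractionRing (MvPolynomial (Fin n) K) F]

local notation "ι" => algebraMap (MvPolynomial (Fin _) _)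

lemma algebraMap_X_ne_zero (j : Fin n) : ι F (X j : MvPolynomial (Fin n) K) ≠ 0 := by
  rw [Ne, IsFractionRing.to_map_eq_zero_iff (R := MvPolynomial (Fin n) K)]
  exact X_ne_zero j

lemma exists_mul_pow_eq_algebraMap {p : ℕ} (hp : p ≠ 0) (f : F) :
    ∃ g b : MvPolynomial (Fin n) K, b ≠ 0 ∧ f * ι F (b ^ p) = ι F g := by
  obtain ⟨a, b, hb, rfl⟩ := IsFractionRing.div_surjective (A := MvPolynomial (Fin n) K) f
  have hb0 : b ≠ 0 := nonZeroDivisors.ne_zero hb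
  have hb1 : ι F b ≠ 0 := by
    rwa [Ne, IsFractionRing.to_map_eq_zero_iff (R := MvPolynomial (Fin n) K)]
  obtain ⟨q, rfl⟩ := Nat.exists_eq_succ_of_ne_zero hp
  refine ⟨a * b ^ q, b, hb0, ?_⟩
  simp only [map_mul, map_pow, Nat.succ_eq_add_one, pow_succ]
  field_simp

/-- Additive maps on `K(z)` that are linear over `p`-th powers of polynomials agree as soon as
they agree on monomials. -/
lemma addMonoidEnd_eq_of_monomial {p : ℕ} (hp : p ≠ 0) {A B : AddMonoid.End F}
    (hA : ∀ f (b : MvPolynomial (Fin n) K), A (f * ι F (b ^ p)) = A f * ι F (b ^ p))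
    (hB : ∀ f (b : MvPolynomial (Fin n) K), B (f * ι F (b ^ p)) = B f * ι F (b ^ p))
    (h : ∀ (m : Fin n →₀ ℕ) (a : K), A (ι F (monomial m a)) = B (ι F (monomial m a))) : A = B := by
  refine DFunLike.ext _ _ fun f => ?_
  obtain ⟨g, b, hb, hf⟩ := exists_mul_pow_eq_algebraMap (K := K) (n := n) hp f
  have hb1 : ι F (b ^ p) ≠ 0 := by
    rw [Ne, IsFractionRing.to_map_eq_zero_iff (R := MvPolynomial (Fin n) K)]
    exact pow_ne_zero p hb
  refine mul_right_cancel₀ hb1 ?_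
  rw [← hA, ← hB, hf, g.as_sum, map_sum, map_sum, map_sum]
  exact Finset.sum_congr rfl fun m _ => h m _

variable [Algebra K F] {δ : Fin n → Derivation K F F} {p : ℕ} [CharP K p]

lemma logDerivation_commute
    (hδ : ∀ (j : Fin n) (g : MvPolynomial (Fin n) K), δ j (ι F g) = ι F (pderiv j g)) (hp : p ≠ 0)
    (i j : Fin n) : Commute (logDerivation δ i) (logDerivation δ j) := by
  refine addMonoidEnd_eq_of_monomial (K := K) (n := n) hp (fun f b => ?_) (fun f b => ?_)
    fun m a => ?_
  · simp only [AddMonoid.End.coe_mul, Function.comp_apply, logDerivation_mul_pow_char hδ]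
  · simp only [AddMonoid.End.coe_mul, Function.comp_apply, logDerivation_mul_pow_char hδ]
  · have h := fun (i : Fin n) (a : K) => logDerivation_pow_monomial hδ i m a 1
    simp only [pow_one] at h
    simp only [AddMonoid.End.coe_mul, Function.comp_apply, h, mul_right_comm]

lemma logDerivation_pow_char
    (hδ : ∀ (j : Fin n) (g : MvPolynomial (Fin n) K), δ j (ι F g) = ι F (pderiv j g)) (hp : p.Prime)
    (j : Fin n) : logDerivation δ j ^ p = logDerivation δ j := by
  refine addMonoidEnd_eq_of_monomial (K := K) (n := n) hp.ne_zero
    (fun f b => logDerivation_pow_mul_pow_char hδ j f b p)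
    (fun f b => logDerivation_mul_pow_char hδ j f b) fun m a => ?_
  have : Fact p.Prime := ⟨hp⟩
  have h := logDerivation_pow_monomial hδ j m a 1
  simp only [pow_one] at h
  rw [logDerivation_pow_monomial hδ, h, ← frobenius_def, map_natCast]

variable {φ : F →+* F}

lemma logDerivation_apply_eq_zero_of_substitution
    (hδ : ∀ (j : Fin n) (g : MvPolynomial (Fin n) K), δ j (ι F g) = ι F (pderiv j g))
    (hφ : ∀ g : MvPolynomial (Fin n) K, φ (ι F g) = ι F (expand p g)) (j : Fin n) (f : F) :
    logDerivation δ j (φ f) = 0 := by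
  have hpoly : ∀ g : MvPolynomial (Fin n) K, δ j (φ (ι F g)) = 0 := fun g => by
    rw [hφ, hδ, pderiv_expand_char, map_zero]
  obtain ⟨a, b, hb, hf⟩ := IsFractionRing.div_surjective (A := MvPolynomial (Fin n) K) f
  have hb1 : ι F b ≠ 0 := by
    rw [Ne, IsFractionRing.to_map_eq_zero_iff (R := MvPolynomial (Fin n) K)]
    exact nonZeroDivisors.ne_zero hb
  have h := hpoly a
  rw [← (eq_div_iff hb1).1 hf.symm, map_mul, Derivation.leibniz, hpoly b, smul_zero, zero_add,
    smul_eq_mul] at h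
  rw [logDerivation_apply, (mul_eq_zero.1 h).resolve_left ((map_ne_zero φ).2 hb1), mul_zero]

lemma exists_substitution_eq_of_logDerivation_eq_zero
    (hδ : ∀ (j : Fin n) (g : MvPolynomial (Fin n) K), δ j (ι F g) = ι F (pderiv j g))
    (hφ : ∀ g : MvPolynomial (Fin n) K, φ (ι F g) = ι F (expand p g)) (hp : p ≠ 0) (f : F)
    (hf : ∀ j, logDerivation δ j f = 0) : ∃ c, φ c = f := by
  obtain ⟨g, b, hb, hfg⟩ := exists_mul_pow_eq_algebraMap (K := K) (n := n) hp f
  have hb1 : ι F (b ^ p) ≠ 0 := by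
    rw [Ne, IsFractionRing.to_map_eq_zero_iff (R := MvPolynomial (Fin n) K)]
    exact pow_ne_zero p hb
  obtain ⟨b', hb'⟩ := exists_expand_eq_of_pderiv_eq_zero (b ^ p) (pderiv_pow_char b)
  have hg : ∀ j, pderiv j g = 0 := fun j => by
    have h := logDerivation_mul_pow_char hδ j f b
    rw [hf, zero_mul, hfg, logDerivation_apply, hδ] at h
    have := (mul_eq_zero.1 h).resolve_left (algebraMap_X_ne_zero (K := K) j)
    rwa [IsFractionRing.to_map_eq_zero_iff (R := MvPolynomial (Fin n) K)] at this
  obtain ⟨g', hg'⟩ := exists_expand_eq_of_pderiv_eq_zero g hg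
  refine ⟨ι F g' / ι F b', ?_⟩
  rw [map_div₀, hφ, hφ, hb', hg', ← hfg, mul_div_cancel_right₀ _ hb1]

end FractionField

/-- Over a field `K` of characteristic `p > 0`, the map
`γ₀ : Ω^r_{K(z)/K} → H^r = Z^r/B^r`, `a_I(z) dz_I ↦ [a_I(z^p)·z_I^{p-1} dz_I]`, is a bijection
(for positive degrees `r = r₀+1`). Here `φ₀` is the substitution `a(z) ↦ a(z^p)` on `K(z)`
(any ring endomorphism extending `z_i ↦ z_i^p` on polynomials) and `D` is the family of partial
derivatives (any family of derivations extending the formal `∂_j` of `K[z]`).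
Bijectivity of the induced map on cohomology is expressed by: `γ₀` lands in closed forms, every
closed form is cohomologous to some `γ₀ ω`, and `γ₀ ω` exact implies `ω = 0`. -/
theorem gamma_zero_cohomology_iso
    (K : Type) [Field K] (p n r : ℕ) [CharP K p] (hp : 0 < p)
    (D : Fin n → FractionRing (MvPolynomial (Fin n) K) → FractionRing (MvPolynomial (Fin n) K))
    (hDadd : ∀ j a b, D j (a + b) = D j a + D j b)
    (hDmul : ∀ j a b, D j (a * b) = a * D j b + b * D j a)
    (hDalg : ∀ (j : Fin n) (g : MvPolynomial (Fin n) K),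
      D j (algebraMap (MvPolynomial (Fin n) K) (FractionRing (MvPolynomial (Fin n) K)) g) =
        algebraMap (MvPolynomial (Fin n) K) (FractionRing (MvPolynomial (Fin n) K)) (pderiv j g))
    (φ : FractionRing (MvPolynomial (Fin n) K) →+* FractionRing (MvPolynomial (Fin n) K))
    (hφ : ∀ g : MvPolynomial (Fin n) K,
      φ (algebraMap (MvPolynomial (Fin n) K) (FractionRing (MvPolynomial (Fin n) K)) g) =
        algebraMap (MvPolynomial (Fin n) K) (FractionRing (MvPolynomial (Fin n) K))
          (aeval (fun i : Fin n => X i ^ p) g))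
    (γ : GForm (FractionRing (MvPolynomial (Fin n) K)) n (r + 1) →
      GForm (FractionRing (MvPolynomial (Fin n) K)) n (r + 1))
    (hγ : ∀ ω T, γ ω T = φ (ω T) *
      ∏ i ∈ T.1, algebraMap (MvPolynomial (Fin n) K) (FractionRing (MvPolynomial (Fin n) K))
        (X i) ^ (p - 1)) :
    (∀ ω, gextd D (γ ω) = 0) ∧
      (∀ ζ : GForm (FractionRing (MvPolynomial (Fin n) K)) n (r + 1), gextd D ζ = 0 →
        ∃ (ω : GForm (FractionRing (MvPolynomial (Fin n) K)) n (r + 1))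
          (η : GForm (FractionRing (MvPolynomial (Fin n) K)) n r),
          ∀ T, γ ω T = ζ T + gextd D η T) ∧
      (∀ ω : GForm (FractionRing (MvPolynomial (Fin n) K)) n (r + 1),
        (∃ η : GForm (FractionRing (MvPolynomial (Fin n) K)) n r, γ ω = gextd D η) →
          ∀ T, ω T = 0) := by
  have hprime : p.Prime := (CharP.char_is_prime_or_zero K p).resolve_right hp.ne'
  have hp1 : p - 1 + 1 = p := Nat.sub_add_cancel hp
  obtain ⟨δ, rfl⟩ : ∃ δ : Fin n → Derivation K (FractionRing (MvPolynomial (Fin n) K))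
      (FractionRing (MvPolynomial (Fin n) K)), D = fun j f => δ j f :=
    ⟨fun j => Derivation.mk'
      { toFun := D j
        map_add' := hDadd j
        map_smul' := fun c f => by
          rw [Algebra.smul_def, IsScalarTower.algebraMap_apply K (MvPolynomial (Fin n) K), hDmul,
            hDalg, algebraMap_eq, pderiv_C, map_zero, mul_zero, add_zero, RingHom.id_apply,
            Algebra.smul_def, IsScalarTower.algebraMap_apply K (MvPolynomial (Fin n) K),
            algebraMap_eq] } (hDmul j), rfl⟩
  have hφ' : ∀ g, φ (algebraMap _ _ g) = algebraMap _ _ (expand p g) := fun g => by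
    rw [hφ]; rfl
  have hprod0 : ∀ s : Finset (Fin n), ∏ i ∈ s, algebraMap (MvPolynomial (Fin n) K)
      (FractionRing (MvPolynomial (Fin n) K)) (X i) ≠ 0 := fun s =>
    Finset.prod_ne_zero_iff.2 fun i _ => algebraMap_X_ne_zero i
  have hlog : ∀ ω T, (∏ i ∈ T.1, algebraMap (MvPolynomial (Fin n) K)
      (FractionRing (MvPolynomial (Fin n) K)) (X i)) * γ ω T = φ ((∏ i ∈ T.1, algebraMap
        (MvPolynomial (Fin n) K) (FractionRing (MvPolynomial (Fin n) K)) (X i)) * ω T) := by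
    intro ω T
    rw [hγ, mul_left_comm, ← Finset.prod_mul_distrib, map_mul, map_prod, mul_comm]
    congr 1
    refine Finset.prod_congr rfl fun i _ => ?_
    rw [hφ', expand_X, map_pow, ← pow_succ', hp1]
  have hcomm := logDerivation_commute (p := p) hDalg hprime.ne_zero
  have hpow := logDerivation_pow_char (p := p) hDalg hprime
  have hker := logDerivation_apply_eq_zero_of_substitution (p := p) hDalg hφ'
  refine ⟨fun ω => ?_, fun ζ hζ => ?_, fun ω ⟨η, hη⟩ T => ?_⟩
  · ext T
    refine mul_left_cancel₀ (hprod0 T.1) ?_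
    rw [prod_mul_gextd hDalg, funext (hlog ω)]
    simp only [gextd, hker, mul_zero, Finset.sum_const_zero, Pi.zero_apply]
  · obtain ⟨v, h, hv, -, hθv⟩ := exists_horizontal_cohomologous hprime.two_le hcomm hpow
      Finset.univ (fun T => (∏ i ∈ T.1, algebraMap (MvPolynomial (Fin n) K)
        (FractionRing (MvPolynomial (Fin n) K)) (X i)) * ζ T) (by
          ext T
          rw [← prod_mul_gextd hDalg, hζ]
          simp)
    choose c hc using fun T => exists_substitution_eq_of_logDerivation_eq_zero hDalg hφ'
      hprime.ne_zero (v T) (fun j => hθv j (Finset.mem_univ j) T)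
    refine ⟨fun T => c T / ∏ i ∈ T.1, algebraMap (MvPolynomial (Fin n) K)
        (FractionRing (MvPolynomial (Fin n) K)) (X i),
      fun S => h S / ∏ i ∈ S.1, algebraMap (MvPolynomial (Fin n) K)
        (FractionRing (MvPolynomial (Fin n) K)) (X i), fun T => ?_⟩
    refine mul_left_cancel₀ (hprod0 T.1) ?_
    rw [hlog, mul_add, prod_mul_gextd hDalg, mul_div_cancel₀ _ (hprod0 T.1), hc, hv]
    simp only [mul_div_cancel₀ _ (hprod0 _)]
    rfl
  · have h0 := eq_zero_of_horizontal_of_exact hprime.two_le hcomm hpow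
      (fun T => (∏ i ∈ T.1, algebraMap (MvPolynomial (Fin n) K)
        (FractionRing (MvPolynomial (Fin n) K)) (X i)) * γ ω T)
      (fun i T => by rw [hlog, hker])
      ⟨fun S => (∏ i ∈ S.1, algebraMap (MvPolynomial (Fin n) K)
        (FractionRing (MvPolynomial (Fin n) K)) (X i)) * η S, by
          ext T
          rw [← prod_mul_gextd hDalg, hη]⟩
    have hT := congrFun h0 T
    simp only [hlog, Pi.zero_apply, map_eq_zero] at hT
    exact (mul_eq_zero.1 hT).resolve_left (hprod0 T.1)
end
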